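/- Let (S,T) be a Cuntz-type representation of F_θ^+ on H (m ≥ 2 or n ≥ 2). If for every pair of integers k,l > 0 the row-isometry [S_uT_v : |u|=k, |v|=l] is of dilation type, then the structure projections satisfy P_{k,l} = P_{p,q} for all k,l,p,q > 0; in particular this common projection equals the first structure projection P = ⋀_{k,l>0} P_{k,l} of the nonself-adjoint 2-graph algebra 𝔖. -/

import Mathlib

noncomputable section

open scoped InnerProductSpace ComplexInnerProductSpace Classical

section GeneralDefs

variable {E : Type*} [NormedAddCommGroup E] [InnerProductSpace ℂ E]

/-- The operator associated to a word: `wordOp V [a₁, …, a_r] = V a₁ * ⋯ * V a_r`. -/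
def wordOp {ι : Type*} (V : ι → E →L[ℂ] E) (w : List ι) : E →L[ℂ] E :=
  (w.map V).prod

/-- The operator associated to a word of fixed length `k` given as a function `Fin k → ι`. -/
def fnWordOp {ι : Type*} {k : ℕ} (V : ι → E →L[ℂ] E) (u : Fin k → ι) : E →L[ℂ] E :=
  wordOp V (List.ofFn u)

/-- The closure of a set of operators in the weak operator topology, described via
basic WOT-neighbourhoods (finitely many vector functionals). -/
def wotClosure (S : Set (E →L[ℂ] E)) : Set (E →L[ℂ] E) :=
  {A | ∀ ε > (0 : ℝ), ∀ F : Finset (E × E), ∃ B ∈ S, ∀ p ∈ F, ‖⟪p.1, (A - B) p.2⟫‖ < ε}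

/-- The unital WOT-closed algebra generated by a set of operators. -/
def genWotAlg (G : Set (E →L[ℂ] E)) : Set (E →L[ℂ] E) :=
  wotClosure ((Algebra.adjoin ℂ G : Subalgebra ℂ (E →L[ℂ] E)) : Set (E →L[ℂ] E))

/-- A wandering vector for a row-isometry `V = [V_a : a ∈ ι]`: a unit vector whose orbit
under all words in the `V_a` is an orthonormal family. -/
def IsWandering {ι : Type*} (V : ι → E →L[ℂ] E) (ζ : E) : Prop :=
  ‖ζ‖ = 1 ∧ ∀ w w' : List ι,
    ⟪wordOp V w ζ, wordOp V w' ζ⟫ = if w = w' then 1 else 0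

/-- Restriction of an operator to an invariant subspace (junk value `0` if not invariant). -/
def restrictCLM (A : E →L[ℂ] E) (M : Submodule ℂ E) : M →L[ℂ] M :=
  if h : ∀ x ∈ M, A x ∈ M then
    { toFun := fun x => ⟨A x, h x x.2⟩
      map_add' := by intro x y; ext; simp
      map_smul' := by intro c x; ext; simp
      cont := Continuous.subtype_mk (A.continuous.comp continuous_subtype_val) _ }
  else 0

/-- The unital WOT-closed algebra on `M` generated by the restrictions of the `V a` to `M`. -/
def rowAlgOn {ι : Type*} (V : ι → E →L[ℂ] E) (M : Submodule ℂ E) : Set (M →L[ℂ] M) :=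
  genWotAlg (Set.range fun a => restrictCLM (V a) M)

/-- The unital WOT-closed algebra on `M` generated by the restrictions of the `V a`
is self-adjoint. -/
def restrictedAlgSelfAdjoint {ι : Type*} (V : ι → E →L[ℂ] E) (M : Submodule ℂ E) : Prop :=
  ∀ A ∈ rowAlgOn V M, ∃ B ∈ rowAlgOn V M,
    ∀ x y : M, ⟪((A x : M) : E), (y : E)⟫ = ⟪(x : E), ((B y : M) : E)⟫

variable [CompleteSpace E]

/-- A row-isometry is of dilation type if it is defect free and has no nonzero reducing
subspace on which it is either absolutely continuous (spanned by wandering vectors) or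
singular (generating a self-adjoint WOT-closed algebra). -/
def IsDilationType {ι : Type*} [Fintype ι] (V : ι → E →L[ℂ] E) : Prop :=
  (∑ a, V a * star (V a)) = 1 ∧
    ¬ ∃ M : Submodule ℂ E, M ≠ ⊥ ∧ IsClosed (M : Set E) ∧
      (∀ a, ∀ x ∈ M, V a x ∈ M) ∧ (∀ a, ∀ x ∈ M, star (V a) x ∈ M) ∧
      ((M = (Submodule.span ℂ {ζ : E | ζ ∈ M ∧ IsWandering V ζ}).topologicalClosure) ∨
        restrictedAlgSelfAdjoint V M)

end GeneralDefs

/-- An isometric representation of the single-vertex 2-graph `F_θ⁺` on a Hilbert space `H`. -/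
structure TwoGraphRep (m n : ℕ) (θ : Equiv.Perm (Fin m × Fin n)) (H : Type*)
    [NormedAddCommGroup H] [InnerProductSpace ℂ H] [CompleteSpace H] where
  S : Fin m → H →L[ℂ] H
  T : Fin n → H →L[ℂ] H
  isometS : ∀ i i', star (S i) * S i' = if i = i' then 1 else 0
  isometT : ∀ j j', star (T j) * T j' = if j = j' then 1 else 0
  comm : ∀ i j, S i * T j = T (θ (i, j)).2 * S (θ (i, j)).1

namespace TwoGraphRep

variable {m n : ℕ} {θ : Equiv.Perm (Fin m × Fin n)} {H : Type*}
  [NormedAddCommGroup H] [InnerProductSpace ℂ H] [CompleteSpace H]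

/-- A representation is of Cuntz type if both row-isometries are defect free. -/
def CuntzType (ρ : TwoGraphRep m n θ H) : Prop :=
  (∑ i, ρ.S i * star (ρ.S i)) = 1 ∧ (∑ j, ρ.T j * star (ρ.T j)) = 1

/-- The nonself-adjoint 2-graph algebra `𝔖`: the unital WOT-closed algebra generated by
the `S_i` and `T_j`. -/
def alg (ρ : TwoGraphRep m n θ H) : Set (H →L[ℂ] H) :=
  genWotAlg (Set.range ρ.S ∪ Set.range ρ.T)

/-- The von Neumann algebra generated by the `S_i` and `T_j`: the WOT-closure of the
unital *-algebra they generate. -/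
def vnAlg (ρ : TwoGraphRep m n θ H) : Set (H →L[ℂ] H) :=
  genWotAlg ((Set.range ρ.S ∪ Set.range ρ.T) ∪ star '' (Set.range ρ.S ∪ Set.range ρ.T))

/-- Wandering vector for the row-isometry `[S_u T_v : |u| = k, |v| = l]`. -/
def IsWanderingKL (ρ : TwoGraphRep m n θ H) (k l : ℕ) (ζ : H) : Prop :=
  ‖ζ‖ = 1 ∧ ∀ (p p' : ℕ) (u u' : List (Fin m)) (v v' : List (Fin n)),
    u.length = p * k → v.length = p * l → u'.length = p' * k → v'.length = p' * l →
    ⟪(wordOp ρ.S u * wordOp ρ.T v) ζ, (wordOp ρ.S u' * wordOp ρ.T v') ζ⟫ =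
      if u = u' ∧ v = v' then 1 else 0

/-- The range of the structure projection `P_{k,l}`: the orthogonal complement of the
closed linear span of the wandering vectors of `[S_u T_v : |u| = k, |v| = l]`. -/
def structSpaceKL (ρ : TwoGraphRep m n θ H) (k l : ℕ) : Submodule ℂ H :=
  ((Submodule.span ℂ {ζ : H | ρ.IsWanderingKL k l ζ}).topologicalClosure)ᗮ

/-- The range of the first structure projection `P = ⋀_{k,l>0} P_{k,l}`. -/
def firstStructSpace (ρ : TwoGraphRep m n θ H) : Submodule ℂ H :=
  ⨅ (k : ℕ) (l : ℕ) (_ : 0 < k) (_ : 0 < l), ρ.structSpaceKL k l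

/-- The row-isometry `[S_u T_v : |u| = k, |v| = l]`. -/
def rowKL (ρ : TwoGraphRep m n θ H) (k l : ℕ) :
    ((Fin k → Fin m) × (Fin l → Fin n)) → H →L[ℂ] H :=
  fun p => fnWordOp ρ.S p.1 * fnWordOp ρ.T p.2

/-- A wandering vector for the representation `(S,T)`. -/
def IsWanderingRep (ρ : TwoGraphRep m n θ H) (ζ : H) : Prop :=
  ‖ζ‖ = 1 ∧ ∀ (u u' : List (Fin m)) (v v' : List (Fin n)),
    ⟪(wordOp ρ.S u * wordOp ρ.T v) ζ, (wordOp ρ.S u' * wordOp ρ.T v') ζ⟫ =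
      if u = u' ∧ v = v' then 1 else 0

/-- The representation is irreducible: the only closed subspaces invariant under all
`S_i, T_j, S_i*, T_j*` are `⊥` and `⊤`. -/
def Irreducible (ρ : TwoGraphRep m n θ H) : Prop :=
  ∀ M : Submodule ℂ H, IsClosed (M : Set H) →
    (∀ i, ∀ x ∈ M, ρ.S i x ∈ M) → (∀ i, ∀ x ∈ M, star (ρ.S i) x ∈ M) →
    (∀ j, ∀ x ∈ M, ρ.T j x ∈ M) → (∀ j, ∀ x ∈ M, star (ρ.T j) x ∈ M) →
    M = ⊥ ∨ M = ⊤

/-- The representation is atomic with standard basis `ξ`: every generator maps each basis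
vector to a unimodular multiple of a basis vector. -/
def AtomicBasis {Λ : Type*} (ρ : TwoGraphRep m n θ H) (ξ : HilbertBasis Λ ℂ H) : Prop :=
  (∀ i t, ∃ (c : ℂ) (t' : Λ), ‖c‖ = 1 ∧ ρ.S i (ξ t) = c • ξ t') ∧
  (∀ j t, ∃ (c : ℂ) (t' : Λ), ‖c‖ = 1 ∧ ρ.T j (ξ t) = c • ξ t')

/-- `x` has a blue ring: `S_u x ∈ 𝕋x` for some nonempty word `u`. -/
def HasBlueRing (ρ : TwoGraphRep m n θ H) (x : H) : Prop :=
  ∃ u : List (Fin m), u ≠ [] ∧ ∃ c : ℂ, ‖c‖ = 1 ∧ wordOp ρ.S u x = c • x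

/-- `x` has a red ring: `T_v x ∈ 𝕋x` for some nonempty word `v`. -/
def HasRedRing (ρ : TwoGraphRep m n θ H) (x : H) : Prop :=
  ∃ v : List (Fin n), v ≠ [] ∧ ∃ c : ℂ, ‖c‖ = 1 ∧ wordOp ρ.T v x = c • x

/-- `x` has a mixed ring: `T_v S_u x ∈ 𝕋x` for some nonempty words `u`, `v`. -/
def HasMixedRing (ρ : TwoGraphRep m n θ H) (x : H) : Prop :=
  ∃ (u : List (Fin m)) (v : List (Fin n)), u ≠ [] ∧ v ≠ [] ∧
    ∃ c : ℂ, ‖c‖ = 1 ∧ wordOp ρ.T v (wordOp ρ.S u x) = c • x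

end TwoGraphRep

section RowIsometry

variable {E : Type*} [NormedAddCommGroup E] [InnerProductSpace ℂ E]

@[simp] theorem wordOp_nil {ι : Type*} (V : ι → E →L[ℂ] E) : wordOp V [] = 1 := rfl

@[simp] theorem wordOp_cons {ι : Type*} (V : ι → E →L[ℂ] E) (a : ι) (w : List ι) :
    wordOp V (a :: w) = V a * wordOp V w := by
  simp [wordOp]

theorem wordOp_append {ι : Type*} (V : ι → E →L[ℂ] E) (w w' : List ι) :
    wordOp V (w ++ w') = wordOp V w * wordOp V w' := by
  simp [wordOp]

theorem exists_wordOp_mul_wordOp {ι κ : Type*} {X : ι → E →L[ℂ] E} {Y : κ → E →L[ℂ] E}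
    (h : ∀ a b, ∃ b' a', X a * Y b = Y b' * X a') (u : List ι) (v : List κ) :
    ∃ v' u', v'.length = v.length ∧ u'.length = u.length ∧
      wordOp X u * wordOp Y v = wordOp Y v' * wordOp X u' := by
  have hone : ∀ (u : List ι) (b : κ), ∃ b' u', u'.length = u.length ∧
      wordOp X u * Y b = Y b' * wordOp X u' := by
    intro u
    induction u with
    | nil => exact fun b => ⟨b, [], rfl, by simp⟩
    | cons a u ih =>
      intro b
      obtain ⟨b', u', hu, hb⟩ := ih b
      obtain ⟨b'', a', ha⟩ := h a b'
      refine ⟨b'', a' :: u', by simp [hu], ?_⟩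
      rw [wordOp_cons, wordOp_cons, mul_assoc, hb, ← mul_assoc, ha, mul_assoc]
  induction v generalizing u with
  | nil => exact ⟨[], u, rfl, rfl, by simp⟩
  | cons b v ih =>
    obtain ⟨b', u', hu, hb⟩ := hone u b
    obtain ⟨v', u'', hv, hu', hw⟩ := ih u'
    refine ⟨b' :: v', u'', by simp [hv], hu'.trans hu, ?_⟩
    rw [wordOp_cons, wordOp_cons, ← mul_assoc, hb, mul_assoc, hw, mul_assoc]

theorem wordOp_mem {ι : Type*} {V : ι → E →L[ℂ] E} {M : Submodule ℂ E}
    (hM : ∀ a, ∀ x ∈ M, V a x ∈ M) (w : List ι) {x : E} (hx : x ∈ M) : wordOp V w x ∈ M := by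
  induction w with
  | nil => simpa
  | cons a w ih => simpa using hM a _ ih

/-- The linear map sending `∑ c_w w` to `∑ c_w V_w x`. -/
def orbitMap {ι : Type*} (V : ι → E →L[ℂ] E) (x : E) : (List ι →₀ ℂ) →ₗ[ℂ] E :=
  Finsupp.linearCombination ℂ fun w => wordOp V w x

@[simp] theorem orbitMap_single {ι : Type*} (V : ι → E →L[ℂ] E) (x : E) (w : List ι) (c : ℂ) :
    orbitMap V x (Finsupp.single w c) = c • wordOp V w x := by
  simp [orbitMap]

theorem orbitMap_add_smul {ι : Type*} (V : ι → E →L[ℂ] E) (x y : E) (t : ℂ) (c : List ι →₀ ℂ) :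
    orbitMap V (x + t • y) c = orbitMap V x c + t • orbitMap V y c := by
  induction c using Finsupp.induction_linear with
  | zero => simp
  | add f g hf hg => simp only [map_add, hf, hg, smul_add]; abel
  | single w c => simp [smul_comm t c]

theorem apply_orbitMap {ι : Type*} (V : ι → E →L[ℂ] E) (x : E) (a : ι) (c : List ι →₀ ℂ) :
    V a (orbitMap V x c) = orbitMap V x (c.mapDomain (a :: ·)) := by
  induction c using Finsupp.induction_linear with
  | zero => simp
  | add f g hf hg => simp [hf, hg, Finsupp.mapDomain_add]
  | single w c => simp [Finsupp.mapDomain_single]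

/-- An intertwiner maps orbits to orbits. -/
theorem map_orbitMap {F : Type*} [NormedAddCommGroup F] [InnerProductSpace ℂ F] {ι : Type*}
    {V : ι → E →L[ℂ] E} {V' : ι → F →L[ℂ] F} (A : E →ₗ[ℂ] F)
    (hA : ∀ a x, A (V a x) = V' a (A x)) (x : E) (c : List ι →₀ ℂ) :
    A (orbitMap V x c) = orbitMap V' (A x) c := by
  have hw : ∀ w : List ι, A (wordOp V w x) = wordOp V' w (A x) := by
    intro w
    induction w with
    | nil => simp
    | cons a w ih => simp [hA, ih]
  induction c using Finsupp.induction_linear with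
  | zero => simp
  | add f g hf hg => simp [hf, hg]
  | single w c => simp [hw]

theorem orbitMap_mem {ι : Type*} {V : ι → E →L[ℂ] E} {M : Submodule ℂ E}
    (hM : ∀ a, ∀ x ∈ M, V a x ∈ M) {x : E} (hx : x ∈ M) (c : List ι →₀ ℂ) :
    orbitMap V x c ∈ M := by
  induction c using Finsupp.induction_linear with
  | zero => simp
  | add f g hf hg => simpa using M.add_mem hf hg
  | single w c => simpa using M.smul_mem c (wordOp_mem hM w hx)

/-- The orbit map of `x` extends to a contraction from the Fock space. -/
def ContractiveOrbit {ι : Type*} (V : ι → E →L[ℂ] E) (x : E) : Prop :=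
  ∀ c : List ι →₀ ℂ, ‖orbitMap V x c‖ ^ 2 ≤ c.sum fun _ z => ‖z‖ ^ 2

theorem IsWandering.orthonormal {ι : Type*} {V : ι → E →L[ℂ] E} {ζ : E}
    (h : IsWandering V ζ) : Orthonormal ℂ fun w => wordOp V w ζ :=
  orthonormal_iff_ite.2 h.2

theorem IsWandering.apply {ι : Type*} {V : ι → E →L[ℂ] E} {ζ : E} (h : IsWandering V ζ) (a : ι) :
    IsWandering V (V a ζ) := by
  have key : ∀ w, wordOp V w (V a ζ) = wordOp V (w ++ [a]) ζ := fun w => by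
    simp [wordOp_append]
  refine ⟨?_, fun w w' => ?_⟩
  · have := h.orthonormal.1 [a]
    simpa using this
  · rw [key, key, h.2]
    simp

theorem IsWandering.norm_orbitMap_sq {ι : Type*} {V : ι → E →L[ℂ] E} {ζ : E}
    (h : IsWandering V ζ) (c : List ι →₀ ℂ) :
    ‖orbitMap V ζ c‖ ^ 2 = c.sum fun _ z => ‖z‖ ^ 2 := by
  have h1 := h.orthonormal.inner_finsupp_eq_sum_left c c
  have h2 := inner_self_eq_norm_sq_to_K (𝕜 := ℂ) (orbitMap V ζ c)
  rw [orbitMap, h1] at h2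
  apply Complex.ofReal_injective
  rw [orbitMap]
  push_cast [Finsupp.sum] at h2 ⊢
  rw [← Complex.coe_algebraMap, ← h2]
  refine Finset.sum_congr rfl fun w _ => ?_
  rw [mul_comm, Complex.mul_conj, Complex.normSq_eq_norm_sq]
  simp

theorem IsWandering.contractiveOrbit {ι : Type*} {V : ι → E →L[ℂ] E} {ζ : E}
    (h : IsWandering V ζ) : ContractiveOrbit V ζ := fun c => (h.norm_orbitMap_sq c).le

theorem coe_restrictCLM {A : E →L[ℂ] E} {M : Submodule ℂ E} (h : ∀ x ∈ M, A x ∈ M) (x : M) :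
    (restrictCLM A M x : E) = A x := by
  rw [restrictCLM, dif_pos h]
  rfl

/-- The closed linear span of the wandering vectors lying in `M`. -/
def wanderingSpan {ι : Type*} (V : ι → E →L[ℂ] E) (M : Submodule ℂ E) : Submodule ℂ E :=
  (Submodule.span ℂ {ζ : E | ζ ∈ M ∧ IsWandering V ζ}).topologicalClosure

theorem mem_wanderingSpan {ι : Type*} {V : ι → E →L[ℂ] E} {M : Submodule ℂ E} {ζ : E}
    (hM : ζ ∈ M) (h : IsWandering V ζ) : ζ ∈ wanderingSpan V M :=
  Submodule.le_topologicalClosure _ (Submodule.subset_span ⟨hM, h⟩)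

theorem isClosed_wanderingSpan {ι : Type*} (V : ι → E →L[ℂ] E) (M : Submodule ℂ E) :
    IsClosed (wanderingSpan V M : Set E) :=
  Submodule.isClosed_topologicalClosure _

theorem wanderingSpan_le {ι : Type*} {V : ι → E →L[ℂ] E} {M N : Submodule ℂ E}
    (hN : IsClosed (N : Set E)) (h : ∀ ζ ∈ M, IsWandering V ζ → ζ ∈ N) :
    wanderingSpan V M ≤ N :=
  Submodule.topologicalClosure_minimal _ (Submodule.span_le.2 fun ζ hζ => h ζ hζ.1 hζ.2) hN

theorem wanderingSpan_mono {ι : Type*} (V : ι → E →L[ℂ] E) {M N : Submodule ℂ E} (h : M ≤ N) :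
    wanderingSpan V M ≤ wanderingSpan V N :=
  wanderingSpan_le (isClosed_wanderingSpan V N) fun _ hζ hw => mem_wanderingSpan (h hζ) hw

theorem mem_wanderingSpan_orthogonal {ι : Type*} {V : ι → E →L[ℂ] E} {M : Submodule ℂ E} {x : E} :
    x ∈ (wanderingSpan V M)ᗮ ↔ ∀ ζ ∈ M, IsWandering V ζ → ⟪ζ, x⟫ = 0 := by
  refine ⟨fun h ζ hζ hw => (Submodule.mem_orthogonal _ _).1 h ζ (mem_wanderingSpan hζ hw),
    fun h => ?_⟩
  rw [wanderingSpan, Submodule.orthogonal_closure, Submodule.mem_orthogonal]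
  intro u hu
  induction hu using Submodule.span_induction with
  | mem z hz => exact h z hz.1 hz.2
  | zero => simp
  | add y z _ _ hy hz => simp [inner_add_left, hy, hz]
  | smul c y _ hy => simp [inner_smul_left, hy]

section Ampliation

variable {F : Type*} [Fintype F]

/-- The diagonal ampliation of an operator. -/
def ampliation (F : Type*) [Fintype F] (A : E →L[ℂ] E) :
    PiLp 2 (fun _ : F => E) →L[ℂ] PiLp 2 (fun _ : F => E) :=
  (PiLp.continuousLinearEquiv 2 ℂ fun _ : F => E).symm.toContinuousLinearMap ∘L
    (ContinuousLinearMap.pi fun i => A ∘L PiLp.proj 2 (fun _ : F => E) i)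

@[simp] theorem ampliation_apply (A : E →L[ℂ] E) (x : PiLp 2 (fun _ : F => E)) (i : F) :
    ampliation F A x i = A (x i) := rfl

/-- A vector of the ampliation is wandering only if its components have contractive orbits. -/
theorem IsWandering.contractiveOrbit_component {ι : Type*} {V : ι → E →L[ℂ] E}
    {ζ : PiLp 2 (fun _ : F => E)} (h : IsWandering (fun a => ampliation F (V a)) ζ) (i : F) :
    ContractiveOrbit V (ζ i) := by
  intro c
  rw [← h.norm_orbitMap_sq c]
  have : orbitMap V (ζ i) c = (orbitMap (fun a => ampliation F (V a)) ζ c) i :=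
    (map_orbitMap (PiLp.proj 2 (fun _ : F => E) i).toLinearMap (V := fun a => ampliation F (V a))
      (V' := V) (fun a x => rfl) ζ c).symm
  rw [this]
  gcongr
  exact PiLp.norm_apply_le _ _

end Ampliation

variable [CompleteSpace E]

/-- The operators `V a` are isometries with pairwise orthogonal ranges. -/
def RowIsometry {ι : Type*} (V : ι → E →L[ℂ] E) : Prop :=
  (∀ a, star (V a) * V a = 1) ∧ ∀ a b, a ≠ b → star (V a) * V b = 0

theorem inner_star_apply (A : E →L[ℂ] E) (x y : E) : ⟪x, star A y⟫ = ⟪A x, y⟫ := by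
  rw [ContinuousLinearMap.star_eq_adjoint, ContinuousLinearMap.adjoint_inner_right]

theorem star_apply_inner (A : E →L[ℂ] E) (x y : E) : ⟪star A x, y⟫ = ⟪x, A y⟫ := by
  rw [ContinuousLinearMap.star_eq_adjoint, ContinuousLinearMap.adjoint_inner_left]

theorem star_apply_mem_wanderingSpan_orthogonal {ι : Type*} {V : ι → E →L[ℂ] E}
    {M : Submodule ℂ E} (hM : ∀ a, ∀ x ∈ M, V a x ∈ M) {x : E}
    (hxo : x ∈ (wanderingSpan V M)ᗮ) (b : ι) : star (V b) x ∈ (wanderingSpan V M)ᗮ := by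
  rw [mem_wanderingSpan_orthogonal] at hxo ⊢
  intro ζ hζ hw
  rw [inner_star_apply]
  exact hxo _ (hM b ζ hζ) (hw.apply b)

namespace RowIsometry

variable {ι : Type*} {V : ι → E →L[ℂ] E}

theorem star_apply_self (hV : RowIsometry V) (a : ι) (x : E) : star (V a) (V a x) = x := by
  simpa using DFunLike.congr_fun (hV.1 a) x

theorem star_apply_of_ne (hV : RowIsometry V) {a b : ι} (hab : a ≠ b) (x : E) :
    star (V a) (V b x) = 0 := by
  simpa using DFunLike.congr_fun (hV.2 a b hab) x

theorem star_apply (hV : RowIsometry V) (a b : ι) (x : E) :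
    star (V a) (V b x) = if a = b then x else 0 := by
  split_ifs with h
  · rw [h, hV.star_apply_self]
  · exact hV.star_apply_of_ne h x

theorem inner_apply (hV : RowIsometry V) (a b : ι) (x y : E) :
    ⟪V a x, V b y⟫ = if a = b then ⟪x, y⟫ else 0 := by
  rw [← inner_star_apply, hV.star_apply]
  split_ifs <;> simp

theorem norm_apply (hV : RowIsometry V) (a : ι) (x : E) : ‖V a x‖ = ‖x‖ := by
  have := hV.inner_apply a a x x
  rw [if_pos rfl, inner_self_eq_norm_sq_to_K, inner_self_eq_norm_sq_to_K] at this
  exact (sq_eq_sq₀ (norm_nonneg _) (norm_nonneg _)).1 (by exact_mod_cast this)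

theorem inner_wordOp (hV : RowIsometry V) (x y : E) : ∀ {w w' : List ι},
    w.length = w'.length → ⟪wordOp V w x, wordOp V w' y⟫ = if w = w' then ⟪x, y⟫ else 0
  | [], [], _ => by simp
  | a :: w, b :: w', h => by
    have := hV.inner_wordOp x y (w := w) (w' := w') (by simpa using h)
    simp only [wordOp_cons, mul_apply_eq_comp, hV.inner_apply, this, List.cons.injEq]
    split_ifs <;> simp_all

theorem isWandering (hV : RowIsometry V) {ζ : E} (h1 : ‖ζ‖ = 1)
    (h : ∀ w, w ≠ [] → ⟪wordOp V w ζ, ζ⟫ = 0) : IsWandering V ζ := by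
  refine ⟨h1, fun w => ?_⟩
  induction w with
  | nil =>
    intro w'
    cases w' with
    | nil => simp [inner_self_eq_norm_sq_to_K, h1]
    | cons b w' =>
      have := h (b :: w') (by simp)
      rw [← inner_conj_symm]
      simp_all
  | cons a w ih =>
    intro w'
    cases w' with
    | nil => simpa using h (a :: w) (by simp)
    | cons b w' =>
      simp only [wordOp_cons, mul_apply_eq_comp, hV.inner_apply, ih, List.cons.injEq]
      split_ifs <;> simp_all

/-- Wold decomposition: in a closed invariant subspace, the vectors orthogonal to the wandering
vectors form a coinvariant subspace. -/
theorem star_apply_mem_of_orthogonal [Fintype ι] (hV : RowIsometry V) {M : Submodule ℂ E}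
    (hc : IsClosed (M : Set E)) (hM : ∀ a, ∀ x ∈ M, V a x ∈ M) {x : E} (hx : x ∈ M)
    (hxo : x ∈ (wanderingSpan V M)ᗮ) (b : ι) : star (V b) x ∈ M := by
  have : CompleteSpace M := hc.completeSpace_coe
  set P := M.starProjection
  have hP : ∀ z, P z ∈ M := fun z => M.starProjection_apply_mem z
  set y := x - ∑ a, V a (P (star (V a) x)) with hy
  have hyM : y ∈ M := M.sub_mem hx (M.sum_mem fun a _ => hM a _ (hP _))
  have hby : ∀ b, star (V b) y = star (V b) x - P (star (V b) x) := fun b => by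
    rw [hy, map_sub, map_sum, Finset.sum_eq_single b]
    · rw [hV.star_apply_self]
    · intro a _ hab
      exact hV.star_apply_of_ne hab.symm _
    · simp
  have hbo : ∀ b, ∀ z ∈ M, ⟪z, star (V b) y⟫ = 0 := fun b z hz => by
    rw [hby]
    exact (Submodule.mem_orthogonal _ _).1 (M.sub_starProjection_mem_orthogonal _) z hz
  have hyx : ⟪y, x⟫ = 0 := by
    by_cases h0 : y = 0
    · simp [h0]
    have hn : (‖y‖ : ℂ) ≠ 0 := by simpa using h0
    have hw : IsWandering V ((‖y‖ : ℂ)⁻¹ • y) := by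
      refine hV.isWandering (by simp [norm_smul, h0]) fun w hw => ?_
      obtain ⟨a, w, rfl⟩ := List.exists_cons_of_ne_nil hw
      rw [wordOp_cons, mul_apply_eq_comp, ← inner_star_apply, (star (V a)).map_smul,
        inner_smul_right, hbo a _ (wordOp_mem hM w (M.smul_mem _ hyM)), mul_zero]
    have := mem_wanderingSpan_orthogonal.1 hxo _ (M.smul_mem _ hyM) hw
    rw [inner_smul_left] at this
    exact (mul_eq_zero.1 this).resolve_left (by simpa using h0)
  have hyy : ⟪y, y⟫ = 0 := by
    nth_rewrite 2 [hy]
    rw [inner_sub_right, hyx, inner_sum, Finset.sum_eq_zero, sub_zero]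
    intro a _
    rw [← star_apply_inner, ← inner_conj_symm, hbo a _ (hP _), map_zero]
  have hy0 : y = 0 := inner_self_eq_zero.1 hyy
  have := hby b
  rw [hy0, map_zero] at this
  rw [sub_eq_zero.1 this.symm]
  exact hP _

/-- A perturbation argument: in the presence of a wandering vector, every vector with contractive
orbit lies in the closed span of the wandering vectors. -/
theorem mem_wanderingSpan_of_contractiveOrbit [Fintype ι] (hV : RowIsometry V)
    (hV1 : ∑ a, V a * star (V a) = 1) {M : Submodule ℂ E} (hc : IsClosed (M : Set E))
    (hM : ∀ a, ∀ x ∈ M, V a x ∈ M) {η x : E} (hη : η ∈ M) (hw : IsWandering V η)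
    (hx : x ∈ M) (hxc : ContractiveOrbit V x) : x ∈ wanderingSpan V M := by
  set y := η + (2⁻¹ : ℂ) • x with hy
  set D : ℕ → Submodule ℂ E := fun r =>
    (Finsupp.supported ℂ ℂ {w : List ι | r ≤ w.length}).map (orbitMap V y) with hD
  have hDM : ∀ r, (D r).topologicalClosure ≤ M := fun r =>
    Submodule.topologicalClosure_minimal _ (by
      rintro _ ⟨c, -, rfl⟩
      exact orbitMap_mem hM (M.add_mem hη (M.smul_mem _ hx)) c) hc
  have hshift : ∀ r a, ∀ z ∈ (D r).topologicalClosure, V a z ∈ (D (r + 1)).topologicalClosure := by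
    intro r a z hz
    refine map_mem_closure (V a).continuous hz ?_
    rintro _ ⟨c, hcs, rfl⟩
    refine ⟨c.mapDomain (a :: ·), ?_, (apply_orbitMap V y a c).symm⟩
    rw [SetLike.mem_coe, Finsupp.mem_supported] at hcs ⊢
    intro w hwm
    obtain ⟨w', hw', rfl⟩ := Finset.mem_image.1 (Finsupp.mapDomain_support hwm)
    simpa using hcs hw'
  have hanti : ∀ r, (D (r + 1)).topologicalClosure ≤ (D r).topologicalClosure := fun r =>
    Submodule.topologicalClosure_mono (Submodule.map_mono (Finsupp.supported_mono
      fun w hwm => (Nat.le_succ r).trans hwm))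
  set R := (D 0).topologicalClosure with hR
  have hRc : IsClosed (R : Set E) := Submodule.isClosed_topologicalClosure _
  have hRV : ∀ a, ∀ z ∈ R, V a z ∈ R := fun a z hz => hanti 0 (hshift 0 a z hz)
  have hyR : y ∈ R := Submodule.le_topologicalClosure _
    ⟨Finsupp.single [] 1, by simp, by simp⟩
  have hdeep : ∀ r, ∀ z ∈ R, z ∈ (wanderingSpan V R)ᗮ → z ∈ (D r).topologicalClosure := by
    intro r
    induction r with
    | zero => exact fun z hz _ => hz
    | succ r ih =>
      intro z hz hzo
      have hzs : z = ∑ a, V a (star (V a) z) := by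
        simpa using (DFunLike.congr_fun hV1 z).symm
      rw [hzs]
      exact Submodule.sum_mem _ fun a _ => hshift r a _ (ih _
        (hV.star_apply_mem_of_orthogonal hRc hRV hz hzo a)
        (star_apply_mem_wanderingSpan_orthogonal hRV hzo a))
  have hxη : ∀ c, ‖orbitMap V x c‖ ≤ ‖orbitMap V η c‖ := fun c => by
    have := hxc c
    rw [← hw.norm_orbitMap_sq] at this
    exact le_of_sq_le_sq this (norm_nonneg _)
  have hupper : ∀ c, ‖orbitMap V y c‖ ≤ 3 / 2 * ‖orbitMap V η c‖ := fun c => by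
    rw [hy, orbitMap_add_smul]
    refine (norm_add_le _ _).trans ?_
    rw [norm_smul]
    norm_num
    linarith [hxη c]
  have hlower : ∀ c, ‖orbitMap V η c‖ ≤ 2 * ‖orbitMap V y c‖ := fun c => by
    have h1 := norm_sub_norm_le (orbitMap V η c) (-((2⁻¹ : ℂ) • orbitMap V x c))
    rw [sub_neg_eq_add, ← orbitMap_add_smul, ← hy, norm_neg, norm_smul] at h1
    norm_num at h1
    linarith [hxη c]
  have hsep : ∀ a b : List ι →₀ ℂ, Disjoint a.support b.support →
      ‖orbitMap V y a‖ ≤ 3 * ‖orbitMap V y a - orbitMap V y b‖ := fun a b hab => by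
    have horth : ⟪orbitMap V η a, orbitMap V η b⟫ = 0 := by
      rw [orbitMap, hw.orthonormal.inner_finsupp_eq_sum_left]
      refine Finset.sum_eq_zero fun w hwa => ?_
      change (starRingEnd ℂ) (a w) * b w = 0
      rw [Finsupp.notMem_support_iff.1 (Finset.disjoint_left.1 hab hwa), mul_zero]
    have h1 : ‖orbitMap V η a‖ ≤ ‖orbitMap V η a - orbitMap V η b‖ := by
      have := norm_sub_sq (𝕜 := ℂ) (orbitMap V η a) (orbitMap V η b)
      rw [horth] at this
      refine le_of_sq_le_sq ?_ (norm_nonneg _)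
      simp only [map_zero, mul_zero, sub_zero] at this
      nlinarith [sq_nonneg ‖orbitMap V η b‖]
    have h2 := hlower (a - b)
    rw [map_sub, map_sub] at h2
    linarith [hupper a]
  have hzero : ∀ z ∈ R, z ∈ (wanderingSpan V R)ᗮ → z = 0 := by
    intro z hz hzo
    rw [← norm_le_zero_iff]
    refine le_of_forall_pos_le_add fun ε hε => ?_
    have happrox : ∀ r, ∃ c ∈ Finsupp.supported ℂ ℂ {w : List ι | r ≤ w.length},
        ‖z - orbitMap V y c‖ < ε / 7 := fun r => by
      obtain ⟨_, ⟨c, hcs, rfl⟩, hd⟩ := Metric.mem_closure_iff.1 (hdeep r z hz hzo) (ε / 7)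
        (by positivity)
      exact ⟨c, hcs, by rwa [dist_eq_norm] at hd⟩
    obtain ⟨a, -, ha⟩ := happrox 0
    obtain ⟨b, hbs, hb⟩ := happrox (a.support.sup List.length + 1)
    have hab : Disjoint a.support b.support := Finset.disjoint_left.2 fun w hwa hwb => by
      have h1 : a.support.sup List.length + 1 ≤ w.length := (Finsupp.mem_supported _ _).1 hbs hwb
      have h2 : w.length ≤ a.support.sup List.length := Finset.le_sup (f := List.length) hwa
      omega
    have h1 := hsep a b hab
    have h2 : ‖orbitMap V y a - orbitMap V y b‖ ≤
        ‖z - orbitMap V y b‖ + ‖z - orbitMap V y a‖ := by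
      simpa using norm_sub_le (z - orbitMap V y b) (z - orbitMap V y a)
    have h3 := norm_sub_norm_le z (orbitMap V y a)
    linarith
  have : CompleteSpace (wanderingSpan V R) := (isClosed_wanderingSpan V R).completeSpace_coe
  have hyw : y ∈ wanderingSpan V R := by
    have hmem := Submodule.starProjection_apply_mem (wanderingSpan V R) y
    have := hzero (y - (wanderingSpan V R).starProjection y)
      (R.sub_mem hyR (wanderingSpan_le hRc (fun _ h _ => h) hmem))
      (Submodule.sub_starProjection_mem_orthogonal _)
    rwa [sub_eq_zero.1 this]
  have hyM := wanderingSpan_mono V (hDM 0) hyw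
  have hx2 : x = (2 : ℂ) • (y - η) := by simp [hy, smul_smul]
  rw [hx2]
  exact Submodule.smul_mem _ _ (Submodule.sub_mem _ hyM (mem_wanderingSpan hη hw))

end RowIsometry

theorem star_ampliation (F : Type*) [Fintype F] (A : E →L[ℂ] E) :
    star (ampliation F A) = ampliation F (star A) := by
  ext1 x
  refine ext_inner_left ℂ fun y => ?_
  rw [inner_star_apply]
  simp [PiLp.inner_apply, inner_star_apply]

theorem rowIsometry_ampliation (F : Type*) [Fintype F] {ι : Type*} {V : ι → E →L[ℂ] E}
    (hV : RowIsometry V) : RowIsometry fun a => ampliation F (V a) := by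
  refine ⟨fun a => ?_, fun a b hab => ?_⟩
  · ext x i
    simp [star_ampliation, hV.star_apply_self]
  · ext x i
    simp [star_ampliation, hV.star_apply_of_ne hab]

/-- If no nonzero vector has contractive orbit, then the WOT-closed algebra of a row isometry is
self-adjoint. -/
theorem RowIsometry.star_mem_genWotAlg {ι : Type*} [Fintype ι] {V : ι → E →L[ℂ] E}
    (hV : RowIsometry V) (h : ∀ x, ContractiveOrbit V x → x = 0) {A : E →L[ℂ] E}
    (hA : A ∈ genWotAlg (Set.range V)) : star A ∈ genWotAlg (Set.range V) := by
  have key : ∀ B ∈ Algebra.adjoin ℂ (Set.range V), ∀ F : Finset (E × E), ∀ ε > (0 : ℝ),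
      ∃ C ∈ Algebra.adjoin ℂ (Set.range V), ∀ p ∈ F, ‖⟪p.1, (star B - C) p.2⟫‖ < ε := by
    intro B hB F ε hε
    set x : PiLp 2 (fun _ : F => E) := WithLp.toLp 2 fun p => p.1.2
    set Q : Submodule ℂ (PiLp 2 fun _ : F => E) :=
      { carrier := {y | ∃ C ∈ Algebra.adjoin ℂ (Set.range V), y = ampliation F C x}
        add_mem' := by
          rintro _ _ ⟨C, hC, rfl⟩ ⟨C', hC', rfl⟩
          exact ⟨C + C', add_mem hC hC', by ext i; simp⟩
        zero_mem' := ⟨0, zero_mem _, by ext i; simp⟩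
        smul_mem' := by
          rintro c _ ⟨C, hC, rfl⟩
          exact ⟨c • C, Subalgebra.smul_mem _ hC c, by ext i; simp⟩ } with hQ
    have hQV : ∀ a, ∀ y ∈ Q.topologicalClosure, ampliation F (V a) y ∈ Q.topologicalClosure := by
      intro a y hy
      refine map_mem_closure (ampliation F (V a)).continuous hy ?_
      rintro _ ⟨C, hC, rfl⟩
      exact ⟨V a * C, mul_mem (Algebra.subset_adjoin ⟨a, rfl⟩) hC, by ext i; simp⟩
    have hQs : ∀ a, ∀ y ∈ Q.topologicalClosure,
        ampliation F (star (V a)) y ∈ Q.topologicalClosure := by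
      intro a y hy
      rw [← star_ampliation]
      refine (rowIsometry_ampliation F hV).star_apply_mem_of_orthogonal
        (Submodule.isClosed_topologicalClosure _) hQV hy ?_ a
      rw [mem_wanderingSpan_orthogonal]
      intro ζ _ hw
      have : ζ = 0 := by
        ext i
        exact h _ (hw.contractiveOrbit_component i)
      simp [this]
    have hBQ : ∀ y ∈ Q.topologicalClosure, ampliation F (star B) y ∈ Q.topologicalClosure := by
      induction hB using Algebra.adjoin_induction with
      | mem B hB =>
        obtain ⟨a, rfl⟩ := hB
        exact hQs a
      | algebraMap c =>
        intro y hy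
        convert Submodule.smul_mem _ (star c) hy using 1
        ext i
        simp [Algebra.algebraMap_eq_smul_one]
      | add B C _ _ hB hC =>
        intro y hy
        convert Submodule.add_mem _ (hB y hy) (hC y hy) using 1
        ext i
        simp
      | mul B C _ _ hB hC =>
        intro y hy
        convert hC _ (hB y hy) using 1
        ext i
        simp
    have hxQ : x ∈ Q.topologicalClosure :=
      Submodule.le_topologicalClosure _ ⟨1, one_mem _, by ext i; simp⟩
    set δ := ε / (1 + ∑ p ∈ F, ‖p.1‖) with hδ
    have hs : 0 ≤ ∑ p ∈ F, ‖p.1‖ := Finset.sum_nonneg fun _ _ => norm_nonneg _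
    obtain ⟨_, ⟨C, hC, rfl⟩, hd⟩ := Metric.mem_closure_iff.1 (hBQ x hxQ) δ (by positivity)
    refine ⟨C, hC, fun p hp => ?_⟩
    have h1 : ‖(star B - C) p.2‖ ≤ δ := by
      rw [dist_eq_norm] at hd
      exact (PiLp.norm_apply_le _ (⟨p, hp⟩ : F)).trans hd.le
    have h2 : ‖p.1‖ ≤ ∑ p ∈ F, ‖p.1‖ :=
      Finset.single_le_sum (f := fun p : E × E => ‖p.1‖) (fun _ _ => norm_nonneg _) hp
    calc ‖⟪p.1, (star B - C) p.2⟫‖ ≤ ‖p.1‖ * ‖(star B - C) p.2‖ := norm_inner_le_norm _ _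
      _ ≤ (∑ p ∈ F, ‖p.1‖) * δ := by gcongr
      _ < (1 + ∑ p ∈ F, ‖p.1‖) * δ := by
        have : 0 < δ := by positivity
        nlinarith
      _ = ε := by rw [hδ]; field_simp
  intro ε hε F
  obtain ⟨B, hB, hAB⟩ := hA (ε / 2) (half_pos hε) (F.image Prod.swap)
  obtain ⟨C, hC, hBC⟩ := key B hB F (ε / 2) (half_pos hε)
  refine ⟨C, hC, fun p hp => ?_⟩
  have h1 : ‖⟪p.1, (star A - star B) p.2⟫‖ < ε / 2 := by
    have := hAB p.swap (Finset.mem_image_of_mem _ hp)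
    rwa [← star_sub, inner_star_apply, ← inner_conj_symm, RCLike.norm_conj]
  have h2 := hBC p hp
  calc ‖⟪p.1, (star A - C) p.2⟫‖
      = ‖⟪p.1, (star A - star B) p.2⟫ + ⟪p.1, (star B - C) p.2⟫‖ := by
        rw [← inner_add_right, sub_apply, sub_apply,
          sub_apply, sub_add_sub_cancel]
    _ < ε := (norm_add_le _ _).trans_lt (by linarith)

theorem starProjection_apply_of_reducing {A : E →L[ℂ] E} {K : Submodule ℂ E}
    [K.HasOrthogonalProjection] (hA : ∀ x ∈ K, A x ∈ K) (hA' : ∀ x ∈ K, star A x ∈ K) (x : E) :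
    K.starProjection (A x) = A (K.starProjection x) := by
  refine Submodule.eq_starProjection_of_mem_orthogonal (hA _ (K.starProjection_apply_mem x)) ?_
  rw [← map_sub, Submodule.mem_orthogonal]
  intro u hu
  rw [← star_apply_inner]
  exact (Submodule.mem_orthogonal _ _).1 (K.sub_starProjection_mem_orthogonal x) _ (hA' u hu)

theorem ContractiveOrbit.starProjection {ι : Type*} {V : ι → E →L[ℂ] E} {K : Submodule ℂ E}
    [K.HasOrthogonalProjection] (hK : ∀ a, ∀ x ∈ K, V a x ∈ K)
    (hK' : ∀ a, ∀ x ∈ K, star (V a) x ∈ K) {x : E} (h : ContractiveOrbit V x) :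
    ContractiveOrbit V (K.starProjection x) := by
  intro c
  have := map_orbitMap (V := V) (V' := V) K.starProjection.toLinearMap
    (fun a x => starProjection_apply_of_reducing (hK a) (hK' a) x) x c
  simp only [ContinuousLinearMap.coe_coe] at this
  rw [← this]
  refine le_trans ?_ (h c)
  gcongr
  exact K.norm_starProjection_apply_le _

/-- A reducing subspace of a dilation type row-isometry contained in the closed span of the
wandering vectors contains no wandering vector. -/
theorem IsDilationType.not_isWandering {ι : Type*} [Fintype ι] {V : ι → E →L[ℂ] E}
    (hd : IsDilationType V) (hV : RowIsometry V) {K : Submodule ℂ E}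
    (hc : IsClosed (K : Set E)) (hK : ∀ a, ∀ x ∈ K, V a x ∈ K)
    (hK' : ∀ a, ∀ x ∈ K, star (V a) x ∈ K) (hle : K ≤ wanderingSpan V ⊤) {η : E}
    (hη : η ∈ K) : ¬ IsWandering V η := by
  intro hw
  have : CompleteSpace K := hc.completeSpace_coe
  refine hd.2 ⟨K, ?_, hc, hK, hK', Or.inl (le_antisymm ?_ ?_)⟩
  · rintro rfl
    have h1 := hw.1
    simp [(Submodule.mem_bot ℂ).1 hη] at h1
  · have hP : wanderingSpan V ⊤ ≤
        (wanderingSpan V K).comap (K.starProjection : E →ₗ[ℂ] E) := by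
      refine wanderingSpan_le
        ((isClosed_wanderingSpan V K).preimage K.starProjection.continuous) fun ζ _ hζ => ?_
      exact hV.mem_wanderingSpan_of_contractiveOrbit hd.1 hc hK hη hw
        (K.starProjection_apply_mem ζ) (hζ.contractiveOrbit.starProjection hK hK')
    intro x hx
    have := hP (hle hx)
    rwa [Submodule.mem_comap, ContinuousLinearMap.coe_coe,
      Submodule.starProjection_eq_self_iff.2 hx] at this
  · exact wanderingSpan_le hc fun _ h _ => h

theorem RowIsometry.restrictedAlgSelfAdjoint {ι : Type*} [Fintype ι] {V : ι → E →L[ℂ] E}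
    (hV : RowIsometry V) {M : Submodule ℂ E} (hc : IsClosed (M : Set E))
    (hM : ∀ a, ∀ x ∈ M, V a x ∈ M) (h : ∀ x ∈ M, ContractiveOrbit V x → x = 0) :
    restrictedAlgSelfAdjoint V M := by
  have : CompleteSpace M := hc.completeSpace_coe
  have hinner : ∀ a b, ∀ x y : M,
      ⟪x, (star (restrictCLM (V a) M) * restrictCLM (V b) M) y⟫ = if a = b then ⟪x, y⟫ else 0 := by
    intro a b x y
    rw [mul_apply_eq_comp, inner_star_apply, Submodule.coe_inner, coe_restrictCLM (hM a),
      coe_restrictCLM (hM b), hV.inner_apply, Submodule.coe_inner]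
  have hB : RowIsometry fun a => restrictCLM (V a) M := by
    refine ⟨fun a => ?_, fun a b hab => ?_⟩
    · ext1 y
      refine ext_inner_left ℂ fun x => ?_
      rw [hinner, if_pos rfl, one_apply_eq_self]
    · ext1 y
      refine ext_inner_left ℂ fun x => ?_
      rw [hinner, if_neg hab, zero_apply, inner_zero_right]
  intro A hA
  refine ⟨star A, hB.star_mem_genWotAlg (fun x hx => ?_) hA, fun x y => ?_⟩
  · refine Subtype.ext (h x x.2 fun c => ?_)
    have := map_orbitMap (V := fun a => restrictCLM (V a) M) (V' := V) M.subtype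
      (fun a z => coe_restrictCLM (hM a) z) x c
    rw [Submodule.subtype_apply, Submodule.subtype_apply] at this
    rw [← this]
    exact hx c
  · exact (inner_star_apply A x y).symm

/-- If a dilation type row-isometry has a wandering vector, then every reducing subspace
meeting the closed span of the wandering vectors trivially is zero. -/
theorem IsDilationType.eq_bot {ι : Type*} [Fintype ι] {V : ι → E →L[ℂ] E}
    (hd : IsDilationType V) (hV : RowIsometry V) {K : Submodule ℂ E}
    (hc : IsClosed (K : Set E)) (hK : ∀ a, ∀ x ∈ K, V a x ∈ K)
    (hK' : ∀ a, ∀ x ∈ K, star (V a) x ∈ K) {η : E} (hη : IsWandering V η)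
    (hdisj : K ⊓ wanderingSpan V ⊤ = ⊥) : K = ⊥ := by
  by_contra hne
  refine hd.2 ⟨K, hne, hc, hK, hK', Or.inr (hV.restrictedAlgSelfAdjoint hc hK fun x hx hxc => ?_)⟩
  have : x ∈ K ⊓ wanderingSpan V ⊤ := ⟨hx, hV.mem_wanderingSpan_of_contractiveOrbit hd.1
    (M := ⊤) isClosed_univ (fun _ _ _ => Submodule.mem_top) Submodule.mem_top hη
    Submodule.mem_top hxc⟩
  simpa [hdisj] using this

end RowIsometry

namespace TwoGraphRep

variable {m n : ℕ} {θ : Equiv.Perm (Fin m × Fin n)} {H : Type*}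
  [NormedAddCommGroup H] [InnerProductSpace ℂ H] [CompleteSpace H]

theorem rowIsometry_S (ρ : TwoGraphRep m n θ H) : RowIsometry ρ.S :=
  ⟨fun i => by simp [ρ.isometS], fun i i' h => by simp [ρ.isometS, h]⟩

theorem rowIsometry_T (ρ : TwoGraphRep m n θ H) : RowIsometry ρ.T :=
  ⟨fun j => by simp [ρ.isometT], fun j j' h => by simp [ρ.isometT, h]⟩

theorem T_mul_S (ρ : TwoGraphRep m n θ H) (j : Fin n) (i : Fin m) :
    ρ.T j * ρ.S i = ρ.S (θ.symm (i, j)).1 * ρ.T (θ.symm (i, j)).2 := by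
  rw [ρ.comm]
  simp

/-- `A` is one of the operators `S_u T_v` with `|u| = a` and `|v| = b`. -/
def HasDegree (ρ : TwoGraphRep m n θ H) (a b : ℕ) (A : H →L[ℂ] H) : Prop :=
  ∃ u v, u.length = a ∧ v.length = b ∧ A = wordOp ρ.S u * wordOp ρ.T v

theorem hasDegree_S (ρ : TwoGraphRep m n θ H) (i : Fin m) : ρ.HasDegree 1 0 (ρ.S i) :=
  ⟨[i], [], rfl, rfl, by simp⟩

theorem hasDegree_T (ρ : TwoGraphRep m n θ H) (j : Fin n) : ρ.HasDegree 0 1 (ρ.T j) :=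
  ⟨[], [j], rfl, rfl, by simp⟩

theorem HasDegree.mul {ρ : TwoGraphRep m n θ H} {a b c d : ℕ} {A B : H →L[ℂ] H}
    (hA : ρ.HasDegree a b A) (hB : ρ.HasDegree c d B) : ρ.HasDegree (a + c) (b + d) (A * B) := by
  obtain ⟨u, v, rfl, rfl, rfl⟩ := hA
  obtain ⟨u', v', rfl, rfl, rfl⟩ := hB
  obtain ⟨u'', v'', hu, hv, h⟩ :=
    exists_wordOp_mul_wordOp (fun j i => ⟨_, _, ρ.T_mul_S j i⟩) v u'
  refine ⟨u ++ u'', v'' ++ v', by simp [hu], by simp [hv], ?_⟩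
  rw [wordOp_append, wordOp_append, mul_assoc, mul_assoc, ← mul_assoc (wordOp ρ.T v), h]
  simp only [mul_assoc]

theorem HasDegree.exists_eq_mul {ρ : TwoGraphRep m n θ H} {a b c d : ℕ} {A : H →L[ℂ] H}
    (hA : ρ.HasDegree (a + c) (b + d) A) :
    ∃ B C, ρ.HasDegree a b B ∧ ρ.HasDegree c d C ∧ A = B * C := by
  obtain ⟨u, v, hu, hv, rfl⟩ := hA
  obtain ⟨v', u', hv', hu', h⟩ :=
    exists_wordOp_mul_wordOp (fun i j => ⟨_, _, ρ.comm i j⟩) (u.drop a) (v.take b)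
  refine ⟨_, _, ⟨u.take a, v', by simp [hu], by simp [hv', hv], rfl⟩,
    ⟨u', v.drop b, by simp [hu', hu], by simp [hv], rfl⟩, ?_⟩
  rw [mul_assoc, ← mul_assoc (wordOp ρ.T v'), ← h, mul_assoc (wordOp ρ.S (u.drop a)),
    ← wordOp_append, ← mul_assoc, ← wordOp_append]
  simp

theorem HasDegree.exists_eq_S_mul {ρ : TwoGraphRep m n θ H} {a b : ℕ} {A : H →L[ℂ] H}
    (hA : ρ.HasDegree (a + 1) b A) : ∃ i B, ρ.HasDegree a b B ∧ A = ρ.S i * B := by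
  rw [add_comm, ← zero_add b] at hA
  obtain ⟨_, B, ⟨u, v, hu, hv, rfl⟩, hB, rfl⟩ := hA.exists_eq_mul
  obtain ⟨i, rfl⟩ := List.length_eq_one_iff.1 hu
  obtain rfl := List.length_eq_zero_iff.1 hv
  exact ⟨i, B, hB, by simp⟩

theorem HasDegree.exists_eq_T_mul {ρ : TwoGraphRep m n θ H} {a b : ℕ} {A : H →L[ℂ] H}
    (hA : ρ.HasDegree a (b + 1) A) : ∃ j B, ρ.HasDegree a b B ∧ A = ρ.T j * B := by
  rw [add_comm, ← zero_add a] at hA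
  obtain ⟨_, B, ⟨u, v, hu, hv, rfl⟩, hB, rfl⟩ := hA.exists_eq_mul
  obtain ⟨j, rfl⟩ := List.length_eq_one_iff.1 hv
  obtain rfl := List.length_eq_zero_iff.1 hu
  exact ⟨j, B, hB, by simp⟩

theorem inner_wordOp_mul_wordOp (ρ : TwoGraphRep m n θ H) {u u' : List (Fin m)}
    {v v' : List (Fin n)} (hu : u.length = u'.length) (hv : v.length = v'.length) (x y : H) :
    ⟪(wordOp ρ.S u * wordOp ρ.T v) x, (wordOp ρ.S u' * wordOp ρ.T v') y⟫ =
      if u = u' ∧ v = v' then ⟪x, y⟫ else 0 := by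
  rw [mul_apply_eq_comp, mul_apply_eq_comp, ρ.rowIsometry_S.inner_wordOp _ _ hu,
    ρ.rowIsometry_T.inner_wordOp _ _ hv]
  split_ifs <;> simp_all

theorem HasDegree.inner_apply {ρ : TwoGraphRep m n θ H} {a b : ℕ} {A B : H →L[ℂ] H}
    (hA : ρ.HasDegree a b A) (hB : ρ.HasDegree a b B) :
    (∀ x y, ⟪A x, B y⟫ = ⟪x, y⟫) ∨ ∀ x y, ⟪A x, B y⟫ = 0 := by
  obtain ⟨u, v, rfl, rfl, rfl⟩ := hA
  obtain ⟨u', v', hu, hv, rfl⟩ := hB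
  simp only [ρ.inner_wordOp_mul_wordOp hu.symm hv.symm]
  split_ifs <;> simp

theorem hasDegree_rowKL (ρ : TwoGraphRep m n θ H) (k l : ℕ)
    (a : (Fin k → Fin m) × (Fin l → Fin n)) : ρ.HasDegree k l (ρ.rowKL k l a) :=
  ⟨_, _, List.length_ofFn, List.length_ofFn, rfl⟩

theorem HasDegree.exists_eq_rowKL {ρ : TwoGraphRep m n θ H} {k l : ℕ} {A : H →L[ℂ] H}
    (hA : ρ.HasDegree k l A) : ∃ a, A = ρ.rowKL k l a := by
  obtain ⟨u, v, rfl, rfl, rfl⟩ := hA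
  exact ⟨(u.get, v.get), by simp [rowKL, fnWordOp, List.ofFn_get]⟩

theorem rowIsometry_rowKL (ρ : TwoGraphRep m n θ H) (k l : ℕ) : RowIsometry (ρ.rowKL k l) := by
  have key : ∀ a b, ∀ x y : H, ⟪x, (star (ρ.rowKL k l a) * ρ.rowKL k l b) y⟫ =
      if a = b then ⟪x, y⟫ else 0 := by
    intro a b x y
    simp only [mul_apply_eq_comp, inner_star_apply, rowKL, fnWordOp]
    rw [← mul_apply_eq_comp, ← mul_apply_eq_comp, ρ.inner_wordOp_mul_wordOp (by simp) (by simp)]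
    simp [Prod.ext_iff]
  refine ⟨fun a => ?_, fun a b hab => ?_⟩
  · ext1 y
    refine ext_inner_left ℂ fun x => ?_
    rw [key, if_pos rfl, one_apply_eq_self]
  · ext1 y
    refine ext_inner_left ℂ fun x => ?_
    rw [key, if_neg hab, zero_apply, inner_zero_right]

theorem hasDegree_wordOp_rowKL (ρ : TwoGraphRep m n θ H) (k l : ℕ)
    (w : List ((Fin k → Fin m) × (Fin l → Fin n))) :
    ρ.HasDegree (w.length * k) (w.length * l) (wordOp (ρ.rowKL k l) w) := by
  induction w with
  | nil => exact ⟨[], [], by simp, by simp, by simp⟩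
  | cons a w ih =>
    have := (ρ.hasDegree_rowKL k l a).mul ih
    rwa [← wordOp_cons, add_comm k, add_comm l, ← Nat.succ_mul, ← Nat.succ_mul] at this

theorem HasDegree.exists_eq_wordOp_rowKL {ρ : TwoGraphRep m n θ H} {k l : ℕ} {r : ℕ}
    {A : H →L[ℂ] H} (hA : ρ.HasDegree (r * k) (r * l) A) :
    ∃ w, w.length = r ∧ A = wordOp (ρ.rowKL k l) w := by
  induction r generalizing A with
  | zero =>
    obtain ⟨u, v, hu, hv, rfl⟩ := hA
    rw [zero_mul, List.length_eq_zero_iff] at hu hv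
    exact ⟨[], rfl, by simp [hu, hv]⟩
  | succ r ih =>
    rw [Nat.succ_mul, Nat.succ_mul, add_comm _ k, add_comm _ l] at hA
    obtain ⟨B, C, hB, hC, rfl⟩ := hA.exists_eq_mul
    obtain ⟨a, rfl⟩ := hB.exists_eq_rowKL
    obtain ⟨w, hw, rfl⟩ := ih hC
    exact ⟨a :: w, by simp [hw], by simp⟩

theorem isWandering_rowKL_iff (ρ : TwoGraphRep m n θ H) (k l : ℕ) (ζ : H) :
    IsWandering (ρ.rowKL k l) ζ ↔
      ‖ζ‖ = 1 ∧ ∀ r, 0 < r → ∀ A, ρ.HasDegree (r * k) (r * l) A → ⟪A ζ, ζ⟫ = 0 := by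
  refine ⟨fun h => ⟨h.1, fun r hr A hA => ?_⟩, fun h => ?_⟩
  · obtain ⟨w, rfl, rfl⟩ := hA.exists_eq_wordOp_rowKL
    simpa [(List.length_pos_iff.1 hr)] using h.2 w []
  · exact (ρ.rowIsometry_rowKL k l).isWandering h.1 fun w hw =>
      h.2 _ (List.length_pos_iff.2 hw) _ (ρ.hasDegree_wordOp_rowKL k l w)

theorem isWanderingKL_iff (ρ : TwoGraphRep m n θ H) {k : ℕ} (hk : 0 < k) (l : ℕ) (ζ : H) :
    ρ.IsWanderingKL k l ζ ↔ IsWandering (ρ.rowKL k l) ζ := by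
  rw [isWandering_rowKL_iff]
  refine ⟨fun h => ⟨h.1, ?_⟩, fun h => ⟨h.1, ?_⟩⟩
  · rintro r hr _ ⟨u, v, hu, hv, rfl⟩
    have hu0 : u ≠ [] := List.length_pos_iff.1 (hu ▸ Nat.mul_pos hr hk)
    simpa [hu0] using h.2 r 0 u [] v [] hu hv (by simp) (by simp)
  · have hlt : ∀ p p', p < p' → ∀ A B, ρ.HasDegree (p * k) (p * l) A →
        ρ.HasDegree (p' * k) (p' * l) B → ⟪B ζ, A ζ⟫ = 0 := by
      intro p p' hp A B hA hB
      obtain ⟨r, rfl⟩ := Nat.exists_eq_add_of_lt hp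
      rw [add_assoc, add_mul, add_mul p] at hB
      obtain ⟨B', C, hB', hC, rfl⟩ := hB.exists_eq_mul
      rcases hB'.inner_apply hA with h0 | h0
      · rw [mul_apply_eq_comp, h0]
        exact h.2 _ r.succ_pos _ hC
      · exact h0 _ _
    intro p p' u u' v v' hu hv hu' hv'
    rcases lt_trichotomy p p' with hp | rfl | hp
    · rw [if_neg, ← inner_conj_symm, hlt p p' hp _ _ ⟨u, v, hu, hv, rfl⟩ ⟨u', v', hu', hv', rfl⟩,
        map_zero]
      rintro ⟨rfl, -⟩
      exact hp.ne (Nat.eq_of_mul_eq_mul_right hk (hu.symm.trans hu'))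
    · rw [ρ.inner_wordOp_mul_wordOp (hu.trans hu'.symm) (hv.trans hv'.symm),
        inner_self_eq_norm_sq_to_K, h.1]
      simp
    · rw [if_neg, hlt p' p hp _ _ ⟨u', v', hu', hv', rfl⟩ ⟨u, v, hu, hv, rfl⟩]
      rintro ⟨rfl, -⟩
      exact hp.ne (Nat.eq_of_mul_eq_mul_right hk (hu'.symm.trans hu))

theorem isWandering_S (ρ : TwoGraphRep m n θ H) {k l : ℕ} {ζ : H}
    (h : IsWandering (ρ.rowKL k l) ζ) (i : Fin m) : IsWandering (ρ.rowKL k l) (ρ.S i ζ) := by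
  rw [isWandering_rowKL_iff] at h ⊢
  refine ⟨(ρ.rowIsometry_S.norm_apply i ζ).trans h.1, fun r hr A hA => ?_⟩
  obtain ⟨i', B, hB, hAB⟩ := (hA.mul (ρ.hasDegree_S i)).exists_eq_S_mul
  rw [← mul_apply_eq_comp, hAB, mul_apply_eq_comp, ρ.rowIsometry_S.inner_apply]
  split_ifs
  · exact h.2 r hr B hB
  · rfl

theorem isWandering_T (ρ : TwoGraphRep m n θ H) {k l : ℕ} {ζ : H}
    (h : IsWandering (ρ.rowKL k l) ζ) (j : Fin n) : IsWandering (ρ.rowKL k l) (ρ.T j ζ) := by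
  rw [isWandering_rowKL_iff] at h ⊢
  refine ⟨(ρ.rowIsometry_T.norm_apply j ζ).trans h.1, fun r hr A hA => ?_⟩
  obtain ⟨j', B, hB, hAB⟩ := (hA.mul (ρ.hasDegree_T j)).exists_eq_T_mul
  rw [← mul_apply_eq_comp, hAB, mul_apply_eq_comp, ρ.rowIsometry_T.inner_apply]
  split_ifs
  · exact h.2 r hr B hB
  · rfl

/-- `K` is invariant under all `S_i` and `T_j`. -/
def Inv (ρ : TwoGraphRep m n θ H) (K : Submodule ℂ H) : Prop :=
  (∀ i, ∀ x ∈ K, ρ.S i x ∈ K) ∧ ∀ j, ∀ x ∈ K, ρ.T j x ∈ K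

/-- `K` is invariant under all `S_i*` and `T_j*`. -/
def Coinv (ρ : TwoGraphRep m n θ H) (K : Submodule ℂ H) : Prop :=
  (∀ i, ∀ x ∈ K, star (ρ.S i) x ∈ K) ∧ ∀ j, ∀ x ∈ K, star (ρ.T j) x ∈ K

variable {ρ : TwoGraphRep m n θ H} {K M : Submodule ℂ H}

theorem Inv.inf (hK : ρ.Inv K) (hM : ρ.Inv M) : ρ.Inv (K ⊓ M) :=
  ⟨fun i x hx => ⟨hK.1 i x hx.1, hM.1 i x hx.2⟩, fun j x hx => ⟨hK.2 j x hx.1, hM.2 j x hx.2⟩⟩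

theorem Coinv.inf (hK : ρ.Coinv K) (hM : ρ.Coinv M) : ρ.Coinv (K ⊓ M) :=
  ⟨fun i x hx => ⟨hK.1 i x hx.1, hM.1 i x hx.2⟩, fun j x hx => ⟨hK.2 j x hx.1, hM.2 j x hx.2⟩⟩

theorem Inv.orthogonal (hK : ρ.Inv K) : ρ.Coinv Kᗮ := by
  simp only [Coinv, Submodule.mem_orthogonal, inner_star_apply]
  exact ⟨fun i x hx y hy => hx _ (hK.1 i y hy), fun j x hx y hy => hx _ (hK.2 j y hy)⟩

theorem Coinv.orthogonal (hK : ρ.Coinv K) : ρ.Inv Kᗮ := by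
  simp only [Inv, Submodule.mem_orthogonal, ← star_apply_inner]
  exact ⟨fun i x hx y hy => hx _ (hK.1 i y hy), fun j x hx y hy => hx _ (hK.2 j y hy)⟩

theorem HasDegree.apply_mem {a b : ℕ} {A : H →L[ℂ] H} (hA : ρ.HasDegree a b A) (hK : ρ.Inv K)
    {x : H} (hx : x ∈ K) : A x ∈ K := by
  obtain ⟨u, v, -, -, rfl⟩ := hA
  exact wordOp_mem hK.1 u (wordOp_mem hK.2 v hx)

theorem star_wordOp_mem {ι : Type*} {V : ι → H →L[ℂ] H}
    (hK : ∀ a, ∀ x ∈ K, star (V a) x ∈ K) (w : List ι) {x : H} (hx : x ∈ K) :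
    star (wordOp V w) x ∈ K := by
  induction w generalizing x with
  | nil => simpa
  | cons a w ih => simpa using ih (hK a _ hx)

theorem HasDegree.star_apply_mem {a b : ℕ} {A : H →L[ℂ] H} (hA : ρ.HasDegree a b A)
    (hK : ρ.Coinv K) {x : H} (hx : x ∈ K) : star A x ∈ K := by
  obtain ⟨u, v, -, -, rfl⟩ := hA
  rw [star_mul]
  exact star_wordOp_mem hK.2 v (star_wordOp_mem hK.1 u hx)

theorem Inv.wanderingSpan (hK : ρ.Inv K) (k l : ℕ) : ρ.Inv (wanderingSpan (ρ.rowKL k l) K) := by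
  refine ⟨fun i => ?_, fun j => ?_⟩
  · exact wanderingSpan_le
      (N := (_root_.wanderingSpan (ρ.rowKL k l) K).comap (ρ.S i : H →ₗ[ℂ] H))
      ((isClosed_wanderingSpan _ K).preimage (ρ.S i).continuous)
      fun ζ hζ h => mem_wanderingSpan (hK.1 i ζ hζ) (ρ.isWandering_S h i)
  · exact wanderingSpan_le
      (N := (_root_.wanderingSpan (ρ.rowKL k l) K).comap (ρ.T j : H →ₗ[ℂ] H))
      ((isClosed_wanderingSpan _ K).preimage (ρ.T j).continuous)
      fun ζ hζ h => mem_wanderingSpan (hK.2 j ζ hζ) (ρ.isWandering_T h j)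

/-- The largest subspace of `M` that is invariant under all `S_i*` and `T_j*`. -/
def core (ρ : TwoGraphRep m n θ H) (M : Submodule ℂ H) : Submodule ℂ H :=
  sSup {Q | Q ≤ M ∧ ρ.Coinv Q}

theorem core_le (ρ : TwoGraphRep m n θ H) (M : Submodule ℂ H) : ρ.core M ≤ M :=
  sSup_le fun _ h => h.1

theorem Coinv.le_core (hK : ρ.Coinv K) (h : K ≤ M) : K ≤ ρ.core M :=
  le_sSup ⟨h, hK⟩

theorem coinv_core (ρ : TwoGraphRep m n θ H) (M : Submodule ℂ H) : ρ.Coinv (ρ.core M) := by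
  refine ⟨fun i => ?_, fun j => ?_⟩
  · exact sSup_le (a := (ρ.core M).comap (star (ρ.S i) : H →L[ℂ] H).toLinearMap)
      fun Q hQ x hx => hQ.2.le_core hQ.1 (hQ.2.1 i x hx)
  · exact sSup_le (a := (ρ.core M).comap (star (ρ.T j) : H →L[ℂ] H).toLinearMap)
      fun Q hQ x hx => hQ.2.le_core hQ.1 (hQ.2.2 j x hx)

theorem isClosed_core (ρ : TwoGraphRep m n θ H) (hM : IsClosed (M : Set H)) :
    IsClosed (ρ.core M : Set H) := by
  have hc : ρ.Coinv (ρ.core M).topologicalClosure :=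
    ⟨fun i x hx => map_mem_closure (star (ρ.S i)).continuous hx ((ρ.coinv_core M).1 i),
      fun j x hx => map_mem_closure (star (ρ.T j)).continuous hx ((ρ.coinv_core M).2 j)⟩
  have : (ρ.core M).topologicalClosure = ρ.core M :=
    le_antisymm (hc.le_core (Submodule.topologicalClosure_minimal _ (ρ.core_le M) hM))
      (Submodule.le_topologicalClosure _)
  rw [← this]
  exact Submodule.isClosed_topologicalClosure _

theorem star_apply_apply_mem {ι κ : Type*} [Fintype ι] {X : ι → H →L[ℂ] H}
    {Y : κ → H →L[ℂ] H} (hX : RowIsometry X) (hX1 : ∑ a, X a * star (X a) = 1)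
    (h : ∀ b a, ∃ a' b', Y b * X a = X a' * Y b') {N : Submodule ℂ H}
    (hK : ∀ a, ∀ x ∈ K, star (X a) x ∈ K) (hN : ∀ b, ∀ x ∈ K, Y b x ∈ N) (a : ι) (b : κ)
    {x : H} (hx : x ∈ K) : star (X a) (Y b x) ∈ N := by
  have hxs : x = ∑ c, X c (star (X c) x) := by simpa using (DFunLike.congr_fun hX1 x).symm
  rw [hxs, map_sum, map_sum]
  refine N.sum_mem fun c _ => ?_
  obtain ⟨a', b', hab⟩ := h b c
  rw [← mul_apply_eq_comp (Y b), hab, mul_apply_eq_comp, hX.star_apply]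
  split_ifs
  · exact hN b' _ (hK c x hx)
  · exact N.zero_mem

theorem Inv.core (hM : ρ.Inv M) (hC : ρ.CuntzType) : ρ.Inv (ρ.core M) := by
  set Q := ρ.core M with hQ
  have hQc := ρ.coinv_core M
  set N := Q ⊔ (⨆ i, Q.map (ρ.S i : H →ₗ[ℂ] H)) ⊔ ⨆ j, Q.map (ρ.T j : H →ₗ[ℂ] H) with hN
  have hQN : Q ≤ N := le_sup_left.trans le_sup_left
  have hSN : ∀ i, ∀ x ∈ Q, ρ.S i x ∈ N := fun i x hx =>
    le_sup_left (b := ⨆ j, Q.map (ρ.T j : H →ₗ[ℂ] H)) (le_sup_right (a := Q)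
      (le_iSup (fun i => Q.map (ρ.S i : H →ₗ[ℂ] H)) i (Submodule.mem_map_of_mem hx)))
  have hTN : ∀ j, ∀ x ∈ Q, ρ.T j x ∈ N := fun j x hx =>
    le_sup_right (a := Q ⊔ ⨆ i, Q.map (ρ.S i : H →ₗ[ℂ] H))
      (le_iSup (fun j => Q.map (ρ.T j : H →ₗ[ℂ] H)) j (Submodule.mem_map_of_mem hx))
  have hle : ∀ L : Submodule ℂ H, (∀ x ∈ Q, x ∈ L) → (∀ i, ∀ x ∈ Q, ρ.S i x ∈ L) →
      (∀ j, ∀ x ∈ Q, ρ.T j x ∈ L) → N ≤ L := fun L h1 h2 h3 =>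
    sup_le (sup_le h1 (iSup_le fun i => Submodule.map_le_iff_le_comap.2 (h2 i)))
      (iSup_le fun j => Submodule.map_le_iff_le_comap.2 (h3 j))
  have hNQ : N ≤ Q := by
    refine Coinv.le_core ⟨fun i => ?_, fun j => ?_⟩ (hle M (ρ.core_le M)
      (fun i x hx => hM.1 i x (ρ.core_le M hx)) fun j x hx => hM.2 j x (ρ.core_le M hx))
    · refine hle (N.comap (star (ρ.S i) : H →L[ℂ] H).toLinearMap)
        (fun x hx => hQN (hQc.1 i x hx)) (fun i' x hx => ?_) fun j x hx =>
          star_apply_apply_mem ρ.rowIsometry_S hC.1 (fun j i => ⟨_, _, ρ.T_mul_S j i⟩)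
            hQc.1 hTN i j hx
      rw [Submodule.mem_comap, ContinuousLinearMap.coe_coe, ρ.rowIsometry_S.star_apply]
      split_ifs
      · exact hQN hx
      · exact N.zero_mem
    · refine hle (N.comap (star (ρ.T j) : H →L[ℂ] H).toLinearMap)
        (fun x hx => hQN (hQc.2 j x hx)) (fun i x hx =>
          star_apply_apply_mem ρ.rowIsometry_T hC.2 (fun i j => ⟨_, _, ρ.comm i j⟩)
            hQc.2 hSN j i hx) fun j' x hx => ?_
      rw [Submodule.mem_comap, ContinuousLinearMap.coe_coe, ρ.rowIsometry_T.star_apply]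
      split_ifs
      · exact hQN hx
      · exact N.zero_mem
  exact ⟨fun i x hx => hNQ (hSN i x hx), fun j x hx => hNQ (hTN j x hx)⟩

theorem inf_wanderingSpan_orthogonal_le_core {k l : ℕ} (hk : 0 < k) (hl : 0 < l)
    (h1 : ∑ a, ρ.rowKL k l a * star (ρ.rowKL k l a) = 1) (hc : IsClosed (M : Set H))
    (hM : ρ.Inv M) : M ⊓ (wanderingSpan (ρ.rowKL k l) M)ᗮ ≤ ρ.core M := by
  obtain ⟨k, rfl⟩ := Nat.exists_eq_add_of_lt hk
  obtain ⟨l, rfl⟩ := Nat.exists_eq_add_of_lt hl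
  rw [zero_add, zero_add] at *
  set V := ρ.rowKL (k + 1) (l + 1) with hV
  have hstar : ∀ x ∈ M ⊓ (wanderingSpan V M)ᗮ, ∀ a, star (V a) x ∈ M := fun x hx a =>
    (ρ.rowIsometry_rowKL _ _).star_apply_mem_of_orthogonal hc
      (fun b x hx => (ρ.hasDegree_rowKL _ _ b).apply_mem hM hx) hx.1 hx.2 a
  have hsum : ∀ x, x = ∑ a, V a (star (V a) x) := fun x => by
    simpa using (DFunLike.congr_fun h1 x).symm
  have ho := (hM.wanderingSpan (k + 1) (l + 1)).orthogonal
  refine Coinv.le_core ⟨fun i x hx => ⟨?_, ho.1 i x hx.2⟩, fun j x hx => ⟨?_, ho.2 j x hx.2⟩⟩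
    inf_le_left
  · rw [hsum x, map_sum]
    refine M.sum_mem fun a _ => ?_
    obtain ⟨i', B, hB, hVB⟩ := (ρ.hasDegree_rowKL (k + 1) (l + 1) a).exists_eq_S_mul
    rw [← hV] at hVB
    nth_rewrite 1 [hVB]
    rw [mul_apply_eq_comp, ρ.rowIsometry_S.star_apply]
    split_ifs
    · exact hB.apply_mem hM (hstar x hx a)
    · exact M.zero_mem
  · rw [hsum x, map_sum]
    refine M.sum_mem fun a _ => ?_
    obtain ⟨i', B, hB, hVB⟩ := (ρ.hasDegree_rowKL (k + 1) (l + 1) a).exists_eq_T_mul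
    rw [← hV] at hVB
    nth_rewrite 1 [hVB]
    rw [mul_apply_eq_comp, ρ.rowIsometry_T.star_apply]
    split_ifs
    · exact hB.apply_mem hM (hstar x hx a)
    · exact M.zero_mem

theorem wanderingSpan_rowKL_le (hC : ρ.CuntzType) {k l p q : ℕ} (hk : 0 < k) (hl : 0 < l)
    (hp : 0 < p) (hq : 0 < q) (hkl : IsDilationType (ρ.rowKL k l))
    (hpq : IsDilationType (ρ.rowKL p q)) :
    wanderingSpan (ρ.rowKL p q) ⊤ ≤ wanderingSpan (ρ.rowKL k l) ⊤ := by
  set V := ρ.rowKL k l with hV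
  set W := ρ.rowKL p q with hW
  set L := wanderingSpan W ⊤ with hL
  have htop : ρ.Inv ⊤ := ⟨fun _ _ _ => Submodule.mem_top, fun _ _ _ => Submodule.mem_top⟩
  have hLc : IsClosed (L : Set H) := isClosed_wanderingSpan _ _
  have hLi : ρ.Inv L := htop.wanderingSpan p q
  set K := ρ.core L with hK
  have hKc : IsClosed (K : Set H) := ρ.isClosed_core hLc
  have hKi : ρ.Inv K := hLi.core hC
  have hKo : ρ.Coinv K := ρ.coinv_core L
  have hno : ∀ η ∈ K, ¬ IsWandering W η := fun η hη =>
    hpq.not_isWandering (ρ.rowIsometry_rowKL p q) hKc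
      (fun a x hx => (ρ.hasDegree_rowKL p q a).apply_mem hKi hx)
      (fun a x hx => (ρ.hasDegree_rowKL p q a).star_apply_mem hKo hx) (ρ.core_le L) hη
  have hcore := inf_wanderingSpan_orthogonal_le_core hk hl hkl.1 hLc hLi
  set R := wanderingSpan V L with hR
  have hRc : IsClosed (R : Set H) := isClosed_wanderingSpan _ _
  have : CompleteSpace R := hRc.completeSpace_coe
  have hRL : R ≤ L := wanderingSpan_le hLc fun _ h _ => h
  have hLsup : L = R ⊔ L ⊓ Rᗮ := by
    rw [inf_comm, Submodule.sup_orthogonal_inf_of_hasOrthogonalProjection hRL]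
  by_cases hex : ∃ η, IsWandering V η
  · obtain ⟨η, hη⟩ := hex
    set Q := K ⊓ wanderingSpan V ⊤ with hQ
    have hQc : IsClosed (Q : Set H) := hKc.inter (isClosed_wanderingSpan _ _)
    have hQi : ρ.Inv Q := hKi.inf (htop.wanderingSpan k l)
    have hQo : ρ.Coinv Q := by
      have h0 : wanderingSpan W Q = ⊥ := by
        refine le_bot_iff.1 (wanderingSpan_le isClosed_singleton fun ζ hζ h => ?_)
        exact (hno ζ hζ.1 h).elim
      have h2 := inf_wanderingSpan_orthogonal_le_core hp hq hpq.1 hQc hQi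
      rw [← hW, h0, Submodule.bot_orthogonal_eq_top, inf_top_eq] at h2
      rw [le_antisymm h2 (ρ.core_le Q)]
      exact ρ.coinv_core Q
    have : CompleteSpace Q := hQc.completeSpace_coe
    have hi := hKi.inf hQo.orthogonal
    have ho := hKo.inf hQi.orthogonal
    have hbot : K ⊓ Qᗮ = ⊥ := by
      refine hkl.eq_bot (ρ.rowIsometry_rowKL k l) (hKc.inter (Submodule.isClosed_orthogonal _))
        (fun a x hx => (ρ.hasDegree_rowKL k l a).apply_mem hi hx)
        (fun a x hx => (ρ.hasDegree_rowKL k l a).star_apply_mem ho hx) hη ?_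
      rw [inf_right_comm, ← hQ]
      exact Q.inf_orthogonal_eq_bot
    have hKQ : K = Q := by
      have := Submodule.sup_orthogonal_inf_of_hasOrthogonalProjection (inf_le_left : Q ≤ K)
      rwa [inf_comm Qᗮ, hbot, sup_bot_eq, eq_comm] at this
    rw [hLsup]
    exact sup_le (wanderingSpan_mono V le_top) (hcore.trans (hKQ.trans_le inf_le_right))
  · have hR0 : R = ⊥ := by
      refine le_bot_iff.1 (wanderingSpan_le isClosed_singleton fun ζ _ h => ?_)
      exact (hex ⟨ζ, h⟩).elim
    rw [hR0, Submodule.bot_orthogonal_eq_top, inf_top_eq] at hcore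
    exact wanderingSpan_le (isClosed_wanderingSpan _ _) fun ζ hζ h =>
      (hno ζ (hcore (mem_wanderingSpan hζ h)) h).elim

theorem structSpaceKL_eq (ρ : TwoGraphRep m n θ H) {k : ℕ} (hk : 0 < k) (l : ℕ) :
    ρ.structSpaceKL k l = (wanderingSpan (ρ.rowKL k l) ⊤)ᗮ := by
  simp [structSpaceKL, wanderingSpan, ρ.isWanderingKL_iff hk]

end TwoGraphRep

/-- If all the row-isometries `[S_u T_v : |u|=k, |v|=l]` (k,l>0) are of dilation type, then all
their structure projections coincide, and equal the first structure projection of `𝔖`. -/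
theorem statement1 {m n : ℕ} (hm : 0 < m) (hn : 0 < n) (hmn : 2 ≤ m ∨ 2 ≤ n)
    {θ : Equiv.Perm (Fin m × Fin n)} {H : Type*}
    [NormedAddCommGroup H] [InnerProductSpace ℂ H] [CompleteSpace H]
    (ρ : TwoGraphRep m n θ H) (hCuntz : ρ.CuntzType)
    (hdil : ∀ k l : ℕ, 0 < k → 0 < l → IsDilationType (ρ.rowKL k l)) :
    (∀ k l p q : ℕ, 0 < k → 0 < l → 0 < p → 0 < q →
      ρ.structSpaceKL k l = ρ.structSpaceKL p q) ∧
    (∀ k l : ℕ, 0 < k → 0 < l → ρ.structSpaceKL k l = ρ.firstStructSpace) := by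
  have h : ∀ k l p q : ℕ, 0 < k → 0 < l → 0 < p → 0 < q →
      ρ.structSpaceKL k l = ρ.structSpaceKL p q := by
    intro k l p q hk hl hp hq
    rw [ρ.structSpaceKL_eq hk, ρ.structSpaceKL_eq hp, le_antisymm
      (TwoGraphRep.wanderingSpan_rowKL_le hCuntz hp hq hk hl (hdil p q hp hq) (hdil k l hk hl))
      (TwoGraphRep.wanderingSpan_rowKL_le hCuntz hk hl hp hq (hdil k l hk hl) (hdil p q hp hq))]
  refine ⟨h, fun k l hk hl => le_antisymm ?_ ?_⟩
  · exact le_iInf fun p => le_iInf fun q => le_iInf fun hp => le_iInf fun hq =>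
      (h k l p q hk hl hp hq).le
  · exact iInf_le_of_le k (iInf_le_of_le l (iInf_le_of_le hk (iInf_le_of_le hl le_rfl)))
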